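/- arXiv:1805.03382 — 4 statements merged into one kernel-verified Lean document; each statement's English description precedes it below -/
import Mathlib

section
/- For every menu M on [0,1]^2 with at most 2 items (including the zero item ((0,0),0)), the revenue of M under the uniform distribution on [0,1]^2 is at most 2*sqrt(6)/9. -/
open MeasureTheory Real

noncomputable section

/-- Utility of a buyer with value `v = (v₁, v₂)` for a menu item
`it = ((x₁, x₂), p)`, namely `v₁ * x₁ + v₂ * x₂ - p`. -/
def util (v : ℝ × ℝ) (it : (ℝ × ℝ) × ℝ) : ℝ :=
  v.1 * it.1.1 + v.2 * it.1.2 - it.2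

/-- `M` is a menu: every item has allocation in `[0,1]²` and nonnegative price,
and the zero item `((0,0),0)` belongs to `M`. -/
def IsMenu (M : Finset ((ℝ × ℝ) × ℝ)) : Prop :=
  (((0 : ℝ), (0 : ℝ)), (0 : ℝ)) ∈ M ∧
    ∀ it ∈ M, it.1.1 ∈ Set.Icc (0 : ℝ) 1 ∧ it.1.2 ∈ Set.Icc (0 : ℝ) 1 ∧ 0 ≤ it.2

/-- The price paid by a buyer with value `v`: the highest price among the
utility-maximizing menu items of `M`. -/
def buyerPrice (M : Finset ((ℝ × ℝ) × ℝ)) (v : ℝ × ℝ) : ℝ :=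
  sSup {p : ℝ | ∃ it ∈ M, it.2 = p ∧ ∀ it' ∈ M, util v it' ≤ util v it}

/-- Revenue of the menu `M` under the uniform distribution on `[0,1]²`. -/
def rev (M : Finset ((ℝ × ℝ) × ℝ)) : ℝ :=
  ∫ v in Set.Icc ((0 : ℝ), (0 : ℝ)) ((1 : ℝ), (1 : ℝ)), buyerPrice M v

/-!
A buyer who pays `p` for some item of allocation at most `(1, 1)` would also pay `p` for the whole
bundle. Hence a menu with a single nonzero price `p` earns at most `p` times the area of
`{v ∈ [0,1]² | p ≤ v₁ + v₂}`. This is `p (1 - p² / 2)` for `p ≤ 1`, which is maximal at `p = √6 / 3`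
with value `2√6 / 9`, and `p (2 - p)² / 2 ≤ 1 / 2` for `1 ≤ p ≤ 2`.
-/

lemma exists_mem_forall_eq_or_eq_of_card_le_two {α : Type*} {s : Finset α} {a : α}
    (ha : a ∈ s) (hs : s.card ≤ 2) : ∃ b ∈ s, ∀ x ∈ s, x = a ∨ x = b := by
  classical
  by_cases hb : ∃ b ∈ s, b ≠ a
  · obtain ⟨b, hbs, hba⟩ := hb
    have hpair : {a, b} = s :=
      Finset.eq_of_subset_of_card_le (Finset.insert_subset ha (Finset.singleton_subset_iff.2 hbs))
        (by rwa [Finset.card_pair hba.symm])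
    exact ⟨b, hbs, fun x hx ↦ by simpa [← hpair] using hx⟩
  · push Not at hb
    exact ⟨a, ha, fun x hx ↦ Or.inl (hb x hx)⟩

section Area

lemma measurableSet_le_fst_add_snd (p : ℝ) : MeasurableSet {v : ℝ × ℝ | p ≤ v.1 + v.2} :=
  measurableSet_le (by fun_prop) (by fun_prop)

lemma lintegral_Icc_ofReal_sub {a c : ℝ} (hac : a ≤ c) :
    ∫⁻ x in Set.Icc a c, ENNReal.ofReal (c - x) = ENNReal.ofReal ((c - a) ^ 2 / 2) := by
  have hintegral : ∫ x in Set.Icc a c, (c - x) = (c - a) ^ 2 / 2 := by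
    rw [integral_Icc_eq_integral_Ioc, ← intervalIntegral.integral_of_le hac]
    simp [intervalIntegral.integral_comp_sub_left (fun x ↦ x)]
  rw [← hintegral, ofReal_integral_eq_lintegral_ofReal]
  · exact (continuous_const.sub continuous_id).integrableOn_Icc
  · filter_upwards [ae_restrict_mem measurableSet_Icc] with x hx using sub_nonneg.2 hx.2

lemma volume_real_Ici_inter_add_lt {a : ℝ × ℝ} {p : ℝ} (ha : a.1 + a.2 ≤ p) :
    volume.real (Set.Ici a ∩ {v | v.1 + v.2 < p}) = (p - a.2 - a.1) ^ 2 / 2 := by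
  set T := Set.Ici a ∩ {v : ℝ × ℝ | v.1 + v.2 < p} with hT
  have hmeas : MeasurableSet T :=
    measurableSet_Ici.inter (measurableSet_lt (by fun_prop) (by fun_prop))
  have hslice (x : ℝ) : volume (Prod.mk x ⁻¹' T) =
      (Set.Icc a.1 (p - a.2)).indicator (fun x ↦ ENNReal.ofReal (p - a.2 - x)) x := by
    by_cases hx : x ∈ Set.Icc a.1 (p - a.2)
    · have : Prod.mk x ⁻¹' T = Set.Ico a.2 (p - x) := by
        ext y
        simp [hT, Prod.le_def, hx.1, lt_sub_iff_add_lt']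
      rw [this, Real.volume_Ico, Set.indicator_of_mem hx, sub_right_comm]
    · have : Prod.mk x ⁻¹' T = ∅ := by
        refine Set.eq_empty_of_forall_notMem fun y ⟨⟨hx₁, hy₁⟩, hxy⟩ ↦ hx ⟨hx₁, ?_⟩
        simp only [Set.mem_ofPred_eq] at hy₁ hxy
        linarith
      rw [this, measure_empty, Set.indicator_of_notMem hx]
  rw [measureReal_def, Measure.volume_eq_prod, Measure.prod_apply hmeas]
  simp_rw [hslice]
  rw [lintegral_indicator measurableSet_Icc, lintegral_Icc_ofReal_sub (by linarith),
    ENNReal.toReal_ofReal (by positivity)]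

lemma volume_real_Icc_prod {a b : ℝ × ℝ} (hab : a ≤ b) :
    volume.real (Set.Icc a b) = (b.1 - a.1) * (b.2 - a.2) := by
  rw [Set.Icc_prod_eq, Measure.volume_eq_prod, measureReal_prod_prod,
    Real.volume_real_Icc_of_le hab.1, Real.volume_real_Icc_of_le hab.2]

lemma volume_real_Icc_inter_le_add {a b : ℝ × ℝ} {p : ℝ} (ha : a.1 + a.2 ≤ p)
    (hb₁ : p ≤ b.1 + a.2) (hb₂ : p ≤ a.1 + b.2) :
    volume.real (Set.Icc a b ∩ {v | p ≤ v.1 + v.2}) =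
      (b.1 - a.1) * (b.2 - a.2) - (p - a.2 - a.1) ^ 2 / 2 := by
  have hdiff : Set.Icc a b \ {v | p ≤ v.1 + v.2} = Set.Ici a ∩ {v | v.1 + v.2 < p} := by
    ext v
    simp only [Set.mem_sdiff, Set.mem_Icc, Set.mem_inter_iff, Set.mem_Ici, Set.mem_ofPred_eq,
      not_le, and_congr_left_iff, and_iff_left_iff_imp, Prod.le_def]
    intro hv hav
    constructor <;> linarith
  have hadd := measureReal_inter_add_sdiff (μ := volume) (s := Set.Icc a b)
    (measurableSet_le_fst_add_snd p) isCompact_Icc.measure_ne_top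
  rw [hdiff, volume_real_Ici_inter_add_lt ha,
    volume_real_Icc_prod ⟨by linarith, by linarith⟩] at hadd
  linarith

end Area

section Bundling

/-- The values in the unit square at which a buyer accepts the full bundle `(1, 1)` at price `p`.
Any other item of price `p` is accepted by a subset of these buyers. -/
def bundleBuyers (p : ℝ) : Set (ℝ × ℝ) :=
  Set.Icc (0, 0) (1, 1) ∩ {v | p ≤ v.1 + v.2}

lemma measurableSet_bundleBuyers (p : ℝ) : MeasurableSet (bundleBuyers p) :=
  measurableSet_Icc.inter (measurableSet_le_fst_add_snd p)

lemma bundleBuyers_subset_Icc (p : ℝ) : bundleBuyers p ⊆ Set.Icc (0, 0) (1, 1) :=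
  Set.inter_subset_left

lemma volume_real_bundleBuyers_of_le_one {p : ℝ} (hp₀ : 0 ≤ p) (hp₁ : p ≤ 1) :
    volume.real (bundleBuyers p) = 1 - p ^ 2 / 2 := by
  rw [bundleBuyers, volume_real_Icc_inter_le_add] <;> simp [hp₀, hp₁]

lemma volume_real_bundleBuyers_of_one_le {p : ℝ} (hp₁ : 1 ≤ p) (hp₂ : p ≤ 2) :
    volume.real (bundleBuyers p) = (2 - p) ^ 2 / 2 := by
  -- Both coordinates are at least `p - 1`, which reduces to a square cut along its diagonal.
  have hsquare : bundleBuyers p = Set.Icc (p - 1, p - 1) (1, 1) ∩ {v | p ≤ v.1 + v.2} := by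
    ext v
    simp only [bundleBuyers, Set.mem_inter_iff, Set.mem_Icc, Prod.le_def, Set.mem_ofPred_eq]
    constructor <;> rintro ⟨⟨⟨_, _⟩, _, _⟩, _⟩ <;>
      refine ⟨⟨⟨?_, ?_⟩, ?_, ?_⟩, ?_⟩ <;> linarith
  rw [hsquare, volume_real_Icc_inter_le_add] <;> dsimp only <;> linarith

lemma bundleBuyers_eq_empty {p : ℝ} (hp : 2 < p) : bundleBuyers p = ∅ := by
  refine Set.eq_empty_of_forall_notMem fun v ⟨⟨_, hv₁, hv₂⟩, hpv⟩ ↦ ?_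
  simp only [Set.mem_ofPred_eq] at hv₁ hv₂ hpv
  linarith

lemma mul_one_sub_sq_div_two_le {p : ℝ} (hp : 0 ≤ p) : p * (1 - p ^ 2 / 2) ≤ 2 * √6 / 9 := by
  have hsq : √6 ^ 2 = 6 := Real.sq_sqrt (by norm_num)
  -- The gap is a cubic with a double root at the maximizer `√6 / 3`.
  have hgap : 2 * √6 / 9 - p * (1 - p ^ 2 / 2) = (p - √6 / 3) ^ 2 * (p + 2 * √6 / 3) / 2 := by
    linear_combination (p / 6 - √6 / 27) * hsq
  have hgap_nonneg : 0 ≤ (p - √6 / 3) ^ 2 * (p + 2 * √6 / 3) / 2 := by positivity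
  linarith

lemma mul_two_sub_sq_div_two_le {p : ℝ} (hp₁ : 1 ≤ p) (hp₂ : p ≤ 2) :
    p * ((2 - p) ^ 2 / 2) ≤ 1 / 2 := by
  have hmul : p * (2 - p) ≤ 1 := by linarith [sq_nonneg (p - 1)]
  have := mul_le_one₀ hmul (sub_nonneg.2 hp₂) (by linarith)
  linarith

lemma one_half_le_two_mul_sqrt_six_div_nine : 1 / 2 ≤ 2 * √6 / 9 := by
  have : 9 / 4 ≤ √6 := Real.le_sqrt_of_sq_le (by norm_num)
  linarith

lemma mul_volume_real_bundleBuyers_le {p : ℝ} (hp : 0 ≤ p) :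
    p * volume.real (bundleBuyers p) ≤ 2 * √6 / 9 := by
  rcases le_total p 1 with hp₁ | hp₁
  · rw [volume_real_bundleBuyers_of_le_one hp hp₁]
    exact mul_one_sub_sq_div_two_le hp
  rcases le_or_gt p 2 with hp₂ | hp₂
  · rw [volume_real_bundleBuyers_of_one_le hp₁ hp₂]
    exact (mul_two_sub_sq_div_two_le hp₁ hp₂).trans one_half_le_two_mul_sqrt_six_div_nine
  · rw [bundleBuyers_eq_empty hp₂, measureReal_empty, mul_zero]
    positivity

end Bundling

lemma price_le_add_of_util_nonneg {v : ℝ × ℝ} {it : (ℝ × ℝ) × ℝ} (hv : 0 ≤ v)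
    (hx : it.1 ≤ 1) (hu : 0 ≤ util v it) : it.2 ≤ v.1 + v.2 :=
  calc it.2 ≤ v.1 * it.1.1 + v.2 * it.1.2 := sub_nonneg.1 hu
    _ ≤ v.1 + v.2 :=
      add_le_add (mul_le_of_le_one_right hv.1 hx.1) (mul_le_of_le_one_right hv.2 hx.2)

namespace IsMenu

variable {M : Finset ((ℝ × ℝ) × ℝ)} {p : ℝ}

lemma allocation_le_one (hM : IsMenu M) {it : (ℝ × ℝ) × ℝ} (hit : it ∈ M) : it.1 ≤ 1 :=
  ⟨(hM.2 it hit).1.2, (hM.2 it hit).2.1.2⟩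

lemma price_nonneg (hM : IsMenu M) {it : (ℝ × ℝ) × ℝ} (hit : it ∈ M) : 0 ≤ it.2 :=
  (hM.2 it hit).2.2

lemma buyerPrice_nonneg (hM : IsMenu M) (v : ℝ × ℝ) : 0 ≤ buyerPrice M v := by
  apply Real.sSup_nonneg
  rintro _ ⟨it, hit, rfl, -⟩
  exact hM.price_nonneg hit

lemma util_nonneg_of_forall_util_le (hM : IsMenu M) {v : ℝ × ℝ} {it : (ℝ × ℝ) × ℝ}
    (hmax : ∀ it' ∈ M, util v it' ≤ util v it) : 0 ≤ util v it := by
  simpa [util] using hmax _ hM.1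

lemma buyerPrice_le_indicator_bundleBuyers (hM : IsMenu M) (hp : 0 ≤ p)
    (hprice : ∀ it ∈ M, it.2 = 0 ∨ it.2 = p) {v : ℝ × ℝ} (hv : v ∈ Set.Icc (0, 0) (1, 1)) :
    buyerPrice M v ≤ (bundleBuyers p).indicator (fun _ ↦ p) v := by
  have hind : 0 ≤ (bundleBuyers p).indicator (fun _ ↦ p) v :=
    Set.indicator_nonneg (fun _ _ ↦ hp) v
  refine Real.sSup_le ?_ hind
  rintro _ ⟨it, hit, rfl, hmax⟩
  rcases hprice it hit with hzero | rfl
  · rwa [hzero]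
  · have hpv : it.2 ≤ v.1 + v.2 := price_le_add_of_util_nonneg hv.1 (hM.allocation_le_one hit)
      (hM.util_nonneg_of_forall_util_le hmax)
    have hmem : v ∈ bundleBuyers it.2 := ⟨hv, hpv⟩
    rw [Set.indicator_of_mem hmem]

lemma rev_le_mul_volume_real_bundleBuyers (hM : IsMenu M) (hp : 0 ≤ p)
    (hprice : ∀ it ∈ M, it.2 = 0 ∨ it.2 = p) :
    rev M ≤ p * volume.real (bundleBuyers p) :=
  calc rev M ≤ ∫ v in Set.Icc (0, 0) (1, 1), (bundleBuyers p).indicator (fun _ ↦ p) v := by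
        refine integral_mono_of_nonneg (.of_forall hM.buyerPrice_nonneg)
          ((integrableOn_const isCompact_Icc.measure_ne_top).indicator
            (measurableSet_bundleBuyers p)) ?_
        filter_upwards [ae_restrict_mem measurableSet_Icc] with v hv
        exact hM.buyerPrice_le_indicator_bundleBuyers hp hprice hv
    _ = p * volume.real (bundleBuyers p) := by
        rw [setIntegral_indicator (measurableSet_bundleBuyers p),
          Set.inter_eq_right.2 (bundleBuyers_subset_Icc p), setIntegral_const, smul_eq_mul,
          mul_comm]

end IsMenu

theorem two_menu_revenue_le_general (M : Finset ((ℝ × ℝ) × ℝ))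
    (hM : IsMenu M) (hcard : (M.image Prod.snd).card ≤ 2) :
    rev M ≤ 2 * √6 / 9 := by
  obtain ⟨p, hp_mem, hprice⟩ :=
    exists_mem_forall_eq_or_eq_of_card_le_two (Finset.mem_image_of_mem Prod.snd hM.1) hcard
  have hp : 0 ≤ p := by
    obtain ⟨it, hit, rfl⟩ := Finset.mem_image.1 hp_mem
    exact hM.price_nonneg hit
  calc rev M ≤ p * volume.real (bundleBuyers p) :=
        hM.rev_le_mul_volume_real_bundleBuyers hp fun it hit ↦
          hprice _ (Finset.mem_image_of_mem Prod.snd hit)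
    _ ≤ 2 * √6 / 9 := mul_volume_real_bundleBuyers_le hp

/-- every menu on `[0,1]²` with at most 2 items has revenue at
most `2√6/9` under the uniform distribution on `[0,1]²`. -/
theorem two_menu_revenue_le (M : Finset ((ℝ × ℝ) × ℝ))
    (hM : IsMenu M) (hcard : M.card ≤ 2) :
    rev M ≤ 2 * Real.sqrt 6 / 9 :=
  two_menu_revenue_le_general M hM (Finset.card_image_le.trans hcard)
end
end

section
/- Every symmetric menu M on [0,1]^2 with at most 3 items (including the zero item ((0,0),0)) has revenue strictly less than 59/108 under the uniform distribution on [0,1]^2; hence the optimal at-most-three-item menu for the (symmetric) uniform distribution on [0,1]^2 must be asymmetric. -/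
open MeasureTheory Real

noncomputable section

/-- A menu is symmetric if it is closed under swapping the two coordinates of
the allocation. -/
def SymmetricMenu (M : Finset ((ℝ × ℝ) × ℝ)) : Prop :=
  ∀ it ∈ M, ((it.1.2, it.1.1), it.2) ∈ M

/-!
Let `R = (2/3)√(2/3)` be the best revenue from selling only the bundle of both items at a posted
price; numerically `R ≈ 0.5443 < 0.5463 ≈ 59/108`. A symmetric menu with at most three items either
has a single price `p` besides `0`, or all its items lie on the diagonal. In the first case a buyer
who pays `p` has `v₁ + v₂ ≥ p`, so the revenue is at most that of posting the bundle price `p`. In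
the second case the buyer only cares about `w = v₁ + v₂`. Order the items that are ever bought by
allocation: moving from one item to the next, of allocation `x` and price `p` larger by `Δx` and
`Δp`, is worthwhile only if `w ≥ Δp / Δx`, so the menu collects at most what a lottery over posted
prices `Δp / Δx` with weights `Δx` does, and the weights add up to at most `1`.
-/

section PostedPrices

/-- The payment of a buyer with value `w` facing the take-it-or-leave-it price `t`; an indifferent
buyer accepts. -/
def postedPayment (t w : ℝ) : ℝ := if t ≤ w then t else 0

/-- The expected payment of a buyer with value `w` facing a random posted price. A pair `(c, t)` in
`L` is the price `t` with weight `c`; the weights are not required to add up to `1`. -/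
def mixedPayment (L : List (ℝ × ℝ)) (w : ℝ) : ℝ :=
  (L.map fun l => l.1 * postedPayment l.2 w).sum

lemma mixedPayment_cons (l : ℝ × ℝ) (L : List (ℝ × ℝ)) (w : ℝ) :
    mixedPayment (l :: L) w = l.1 * postedPayment l.2 w + mixedPayment L w := by
  simp only [mixedPayment, List.map_cons, List.sum_cons]

lemma postedPayment_of_le {t w : ℝ} (h : t ≤ w) : postedPayment t w = t := if_pos h

lemma postedPayment_nonneg {t : ℝ} (ht : 0 ≤ t) (w : ℝ) : 0 ≤ postedPayment t w := by
  unfold postedPayment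
  split_ifs <;> simp [ht]

lemma abs_postedPayment_le (t w : ℝ) : |postedPayment t w| ≤ |t| := by
  unfold postedPayment
  split_ifs <;> simp

lemma measurable_postedPayment (t : ℝ) : Measurable (postedPayment t) :=
  Measurable.ite measurableSet_Ici measurable_const measurable_const

-- For `c = 0` the price `r / c` is the junk value `0`, but then `r ≤ 0` anyway.
lemma le_mul_postedPayment_div {c r w : ℝ} (hc : 0 ≤ c) (h : r ≤ w * c) :
    r ≤ c * postedPayment (r / c) w := by
  rcases hc.eq_or_lt with rfl | hc
  · simpa using h
  · rw [postedPayment_of_le ((div_le_iff₀ hc).2 h), mul_div_cancel₀ r hc.ne']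

variable {Ω : Type*} [MeasurableSpace Ω] {μ : Measure Ω} {w : Ω → ℝ}

lemma integral_postedPayment (hw : Measurable w) (t : ℝ) :
    ∫ ω, postedPayment t (w ω) ∂μ = t * μ.real {ω | t ≤ w ω} := by
  have hind : (fun ω => postedPayment t (w ω)) = {ω | t ≤ w ω}.indicator fun _ => t := by
    ext ω
    simp only [postedPayment, Set.indicator, Set.mem_ofPred_eq]
  rw [hind, integral_indicator_const _ (measurableSet_le measurable_const hw), smul_eq_mul,
    mul_comm]

variable [IsFiniteMeasure μ]

lemma integrable_postedPayment (hw : Measurable w) (t : ℝ) :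
    Integrable (fun ω => postedPayment t (w ω)) μ :=
  .of_bound ((measurable_postedPayment t).comp hw).aestronglyMeasurable |t|
    (.of_forall fun ω => abs_postedPayment_le t (w ω))

lemma integrable_mixedPayment (hw : Measurable w) (L : List (ℝ × ℝ)) :
    Integrable (fun ω => mixedPayment L (w ω)) μ := by
  induction L with
  | nil => simp [mixedPayment]
  | cons l L ih =>
    simp only [mixedPayment_cons]
    exact ((integrable_postedPayment hw l.2).const_mul l.1).add ih

lemma integral_mixedPayment_le (hw : Measurable w) {R : ℝ}
    (hR : ∀ t, ∫ ω, postedPayment t (w ω) ∂μ ≤ R) (L : List (ℝ × ℝ)) (hL : ∀ l ∈ L, 0 ≤ l.1) :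
    ∫ ω, mixedPayment L (w ω) ∂μ ≤ (L.map Prod.fst).sum * R := by
  induction L with
  | nil => simp [mixedPayment]
  | cons l L ih =>
    obtain ⟨hl, hL⟩ := List.forall_mem_cons.1 hL
    calc ∫ ω, mixedPayment (l :: L) (w ω) ∂μ
        = l.1 * ∫ ω, postedPayment l.2 (w ω) ∂μ + ∫ ω, mixedPayment L (w ω) ∂μ := by
          simp only [mixedPayment_cons]
          rw [integral_add ((integrable_postedPayment hw l.2).const_mul l.1)
            (integrable_mixedPayment hw L), integral_const_mul]
      _ ≤ l.1 * R + (L.map Prod.fst).sum * R := by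
          gcongr
          exacts [hR l.2, ih hL]
      _ = ((l :: L).map Prod.fst).sum * R := by
          rw [List.map_cons, List.sum_cons, add_mul]

end PostedPrices

section SingleParameter

variable {ι : Type*}

/-- Some buyer with value between `0` and `w` finds item `i` optimal in the menu `N`, in which item
`j` sells the allocation `x j` at the price `p j`. -/
def BoughtUpTo (N : Set ι) (x p : ι → ℝ) (w : ℝ) (i : ι) : Prop :=
  ∃ u ∈ Set.Icc 0 w, IsMaxOn (fun j => u * x j - p j) N i

variable {N : Set ι} {x p : ι → ℝ} {w : ℝ} {i j : ι}

lemma BoughtUpTo.price_sub_le (hi : BoughtUpTo N x p w i) (hj : j ∈ N) (hji : x j ≤ x i) :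
    p i - p j ≤ w * (x i - x j) := by
  obtain ⟨u, ⟨-, huw⟩, hopt⟩ := hi
  have hpref : u * x j - p j ≤ u * x i - p i := hopt hj
  calc p i - p j ≤ u * (x i - x j) := by linarith
    _ ≤ w * (x i - x j) := mul_le_mul_of_nonneg_right huw (sub_nonneg.2 hji)

lemma BoughtUpTo.price_le (hj : BoughtUpTo N x p w j) (hi : i ∈ N) (hji : x j ≤ x i) :
    p j ≤ p i := by
  obtain ⟨u, ⟨hu, -⟩, hopt⟩ := hj
  have hpref : u * x i - p i ≤ u * x j - p j := hopt hi
  linarith [mul_le_mul_of_nonneg_left hji hu]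

lemma BoughtUpTo.of_alloc_le {w' : ℝ} (hi : BoughtUpTo N x p w i) (hj : BoughtUpTo N x p w' j)
    (hiN : i ∈ N) (hji : x j ≤ x i) : BoughtUpTo N x p w j := by
  obtain ⟨u, hu, hiopt⟩ := hi
  obtain ⟨u', hu', hjopt⟩ := hj
  rcases le_total u' u with h | h
  · exact ⟨u', ⟨hu'.1, h.trans hu.2⟩, hjopt⟩
  · refine ⟨u, hu, isMaxOn_iff.2 fun k hk => (isMaxOn_iff.1 hiopt k hk).trans ?_⟩
    have hpref : u' * x i - p i ≤ u' * x j - p j := hjopt hiN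
    have hsub : (u' - u) * x j ≤ (u' - u) * x i :=
      mul_le_mul_of_nonneg_left hji (sub_nonneg.2 h)
    linarith

/-- The lottery `L` over posted prices has total weight `x j` for the item `j ∈ S`, and it collects
at least the price of an item of `S` from every buyer whose value is not below that of some buyer
of this item. -/
structure IsMixtureFor (N : Set ι) (x p : ι → ℝ) (S : Set ι) (j : ι) (L : List (ℝ × ℝ)) :
    Prop where
  mem : j ∈ S
  weight_nonneg : ∀ l ∈ L, 0 ≤ l.1
  sum_weight : (L.map Prod.fst).sum = x j
  price_le : ∀ i ∈ S, ∀ w, BoughtUpTo N x p w i → p i ≤ mixedPayment L w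

lemma isMixtureFor_singleton {z : ι} (hx : x z = 0) (hp : p z = 0) :
    IsMixtureFor N x p {z} z [] where
  mem := rfl
  weight_nonneg := by simp
  sum_weight := by simp [hx]
  price_le := by
    rintro _ rfl w -
    simp [mixedPayment, hp]

lemma IsMixtureFor.insert_of_alloc_le {S : Set ι} {L : List (ℝ × ℝ)} (hL : IsMixtureFor N x p S j L)
    (hj : j ∈ N) (hi : i ∈ N) (hjb : BoughtUpTo N x p w j) (hji : x j ≤ x i) :
    IsMixtureFor N x p (insert i S) i ((x i - x j, (p i - p j) / (x i - x j)) :: L) := by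
  have hx : 0 ≤ x i - x j := sub_nonneg.2 hji
  have hp : 0 ≤ p i - p j := sub_nonneg.2 (hjb.price_le hi hji)
  refine ⟨Set.mem_insert i S, List.forall_mem_cons.2 ⟨hx, hL.weight_nonneg⟩,
    by simp [hL.sum_weight], ?_⟩
  simp only [mixedPayment_cons]
  rintro k (rfl | hk) v hkb
  · have hincr := le_mul_postedPayment_div hx (hkb.price_sub_le hj hji)
    have hbase := hL.price_le j hL.mem v (hkb.of_alloc_le hjb hi hji)
    linarith
  · exact (hL.price_le k hk v hkb).trans
      (le_add_of_nonneg_left (mul_nonneg hx (postedPayment_nonneg (div_nonneg hp hx) v)))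

lemma exists_isMixtureFor {z : ι} (hz : z ∈ N) (hxz : x z = 0) (hpz : p z = 0)
    (hx : ∀ i ∈ N, 0 ≤ x i) (hp : ∀ i ∈ N, 0 ≤ p i) (S : Finset ι)
    (hS : ∀ i ∈ S, i ∈ N ∧ ∃ w, BoughtUpTo N x p w i) :
    ∃ j L, IsMixtureFor N x p (insert z ↑S) j L := by
  classical
  have hzb : BoughtUpTo N x p 0 z :=
    ⟨0, by simp, fun k hk => by simpa [hpz] using hp k hk⟩
  induction S using Finset.induction_on_max_value x with
  | empty => exact ⟨z, [], by simpa using isMixtureFor_singleton hxz hpz⟩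
  | insert i S _ htop ih =>
    obtain ⟨⟨hi, -⟩, hS⟩ := Finset.forall_mem_insert i S _ |>.1 hS
    obtain ⟨j, L, hL⟩ := ih hS
    obtain ⟨hj, ⟨u, hjb⟩, hji⟩ : j ∈ N ∧ (∃ w, BoughtUpTo N x p w j) ∧ x j ≤ x i := by
      rcases hL.mem with rfl | hjS
      · exact ⟨hz, ⟨0, hzb⟩, hxz.trans_le (hx i hi)⟩
      · exact ⟨(hS j hjS).1, (hS j hjS).2, htop j hjS⟩
    have hiL := hL.insert_of_alloc_le hj hi hjb hji
    rw [Set.insert_comm, ← Finset.coe_insert] at hiL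
    exact ⟨i, _, hiL⟩

theorem exists_mixedPayment_ge_price {z : ι} (hN : N.Finite) (hz : z ∈ N) (hxz : x z = 0)
    (hpz : p z = 0) (hx : ∀ i ∈ N, x i ∈ Set.Icc 0 1) (hp : ∀ i ∈ N, 0 ≤ p i) :
    ∃ L : List (ℝ × ℝ), (∀ l ∈ L, 0 ≤ l.1) ∧ (L.map Prod.fst).sum ≤ 1 ∧
      ∀ w, 0 ≤ w → ∀ i ∈ N, IsMaxOn (fun j => w * x j - p j) N i → p i ≤ mixedPayment L w := by
  have hB : {i ∈ N | ∃ w, BoughtUpTo N x p w i}.Finite := hN.subset (Set.sep_subset _ _)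
  obtain ⟨j, L, hL⟩ := exists_isMixtureFor hz hxz hpz (fun i hi => (hx i hi).1) hp hB.toFinset
    fun i hi => hB.mem_toFinset.1 hi
  rw [hB.coe_toFinset] at hL
  have hj : j ∈ N := hL.mem.elim (fun h => h ▸ hz) And.left
  refine ⟨L, hL.weight_nonneg, hL.sum_weight.trans_le (hx j hj).2, fun w hw i hi hopt => ?_⟩
  have hib : BoughtUpTo N x p w i := ⟨w, ⟨hw, le_rfl⟩, hopt⟩
  exact hL.price_le i (.inr ⟨hi, w, hib⟩) w hib

end SingleParameter

section BundlePrice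

/-- The set of values of the two items over which the revenue is computed. -/
abbrev unitSquare : Set (ℝ × ℝ) := Set.Icc (0, 0) (1, 1)

instance isFiniteMeasure_restrict_unitSquare : IsFiniteMeasure (volume.restrict unitSquare) :=
  isFiniteMeasure_restrict.2 isCompact_Icc.measure_lt_top.ne

lemma integral_max_zero_sub {s : ℝ} (hs : s ≤ 1) :
    ∫ x in (0 : ℝ)..1, max 0 (s - x) = max 0 s ^ 2 / 2 := by
  have hintegrable (a b : ℝ) : IntervalIntegrable (fun x => max 0 (s - x)) volume a b :=
    (by fun_prop : Continuous fun x => max 0 (s - x)).intervalIntegrable a b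
  have hright (a : ℝ) (hsa : s ≤ a) (ha : a ≤ 1) : ∫ x in a..1, max 0 (s - x) = 0 := by
    rw [intervalIntegral.integral_congr (g := fun _ => 0), intervalIntegral.integral_zero]
    intro x hx
    rw [Set.uIcc_of_le ha] at hx
    exact max_eq_left (by linarith [hx.1])
  rcases le_total s 0 with hs0 | hs0
  · rw [hright 0 hs0 zero_le_one, max_eq_left hs0]
    norm_num
  · have hleft : ∫ x in (0 : ℝ)..s, max 0 (s - x) = ∫ x in (0 : ℝ)..s, (s - x) := by
      refine intervalIntegral.integral_congr fun x hx => ?_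
      rw [Set.uIcc_of_le hs0] at hx
      exact max_eq_right (by linarith [hx.2])
    rw [← intervalIntegral.integral_add_adjacent_intervals (hintegrable 0 s) (hintegrable s 1),
      hright s le_rfl hs, hleft, max_eq_right hs0,
      intervalIntegral.integral_sub (by simp) (by simp)]
    simp only [intervalIntegral.integral_const, integral_id, smul_eq_mul]
    ring

lemma prod_real_apply {α β : Type*} [MeasurableSpace α] [MeasurableSpace β] {μ : Measure α}
    {ν : Measure β} [IsFiniteMeasure ν] {s : Set (α × β)} (hs : MeasurableSet s) :
    (μ.prod ν).real s = ∫ x, ν.real (Prod.mk x ⁻¹' s) ∂μ := by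
  rw [measureReal_def, Measure.prod_apply hs]
  exact (integral_toReal (measurable_measure_prodMk_left hs).aemeasurable
    (.of_forall fun _ => measure_lt_top ν _)).symm

lemma volume_real_unitSquare_sum_ge (t : ℝ) :
    (volume.restrict unitSquare).real {v | t ≤ v.1 + v.2} =
      ∫ x in (0 : ℝ)..1, max 0 (1 - max 0 (t - x)) := by
  have hmeas : MeasurableSet {v : ℝ × ℝ | t ≤ v.1 + v.2} :=
    measurableSet_le measurable_const (by fun_prop)
  have hsection (x : ℝ) : (volume.restrict (Set.Icc (0 : ℝ) 1)).real
      (Prod.mk x ⁻¹' {v : ℝ × ℝ | t ≤ v.1 + v.2}) = max 0 (1 - max 0 (t - x)) := by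
    have hIcc : Prod.mk x ⁻¹' {v : ℝ × ℝ | t ≤ v.1 + v.2} ∩ Set.Icc 0 1 =
        Set.Icc (max 0 (t - x)) 1 := by
      ext y
      simp only [Set.mem_inter_iff, Set.mem_preimage, Set.mem_ofPred_eq, Set.mem_Icc, max_le_iff,
        sub_le_iff_le_add']
      tauto
    rw [measureReal_restrict_apply (measurable_prodMk_left hmeas), hIcc, Real.volume_real_Icc,
      max_comm]
  rw [unitSquare, ← Set.Icc_prod_Icc, Measure.volume_eq_prod, ← Measure.prod_restrict,
    prod_real_apply hmeas]
  simp_rw [hsection]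
  rw [integral_Icc_eq_integral_Ioc, ← intervalIntegral.integral_of_le zero_le_one]

lemma volume_real_unitSquare_sum_ge_of_le_one {t : ℝ} (ht : t ≤ 1) :
    (volume.restrict unitSquare).real {v | t ≤ v.1 + v.2} =
      1 - max 0 t ^ 2 / 2 := by
  have hcongr : ∫ x in (0 : ℝ)..1, max 0 (1 - max 0 (t - x)) =
      ∫ x in (0 : ℝ)..1, (1 - max 0 (t - x)) := by
    refine intervalIntegral.integral_congr fun x hx => max_eq_right (sub_nonneg.2 ?_)
    rw [Set.uIcc_of_le zero_le_one] at hx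
    exact max_le zero_le_one (by linarith [hx.1])
  rw [volume_real_unitSquare_sum_ge, hcongr, intervalIntegral.integral_sub (by simp)
    ((by fun_prop : Continuous fun x => max 0 (t - x)).intervalIntegrable 0 1),
    integral_max_zero_sub ht]
  simp

lemma volume_real_unitSquare_sum_ge_of_one_le {t : ℝ} (ht : 1 ≤ t) :
    (volume.restrict unitSquare).real {v | t ≤ v.1 + v.2} =
      max 0 (2 - t) ^ 2 / 2 := by
  have hcongr : ∫ x in (0 : ℝ)..1, max 0 (1 - max 0 (t - x)) =
      ∫ x in (0 : ℝ)..1, max 0 (2 - t - (1 - x)) := by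
    refine intervalIntegral.integral_congr fun x hx => ?_
    rw [Set.uIcc_of_le zero_le_one] at hx
    rw [max_eq_right (by linarith [hx.2] : 0 ≤ t - x)]
    ring_nf
  rw [volume_real_unitSquare_sum_ge, hcongr,
    intervalIntegral.integral_comp_sub_left (fun x => max 0 (2 - t - x)), sub_self, sub_zero,
    integral_max_zero_sub (by linarith)]

-- The maximum of `t - t ^ 3 / 2` is attained at `t = √(2/3)`.
lemma sub_cube_div_two_le {t : ℝ} (ht : 0 ≤ t) : t - t ^ 3 / 2 ≤ 2 / 3 * √(2 / 3) := by
  set c := √(2 / 3 : ℝ)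
  have hc : c ^ 2 = 2 / 3 := Real.sq_sqrt (by norm_num)
  have hfactor : 2 / 3 * c - (t - t ^ 3 / 2) = (t - c) ^ 2 * (t + 2 * c) / 2 := by
    linear_combination (3 / 2 * t - c) * hc
  have hnonneg : 0 ≤ (t - c) ^ 2 * (t + 2 * c) / 2 := by positivity
  linarith

lemma half_le_two_thirds_mul_sqrt : (1 / 2 : ℝ) ≤ 2 / 3 * √(2 / 3) := by
  have h : (3 / 4 : ℝ) ≤ √(2 / 3) := Real.le_sqrt_of_sq_le (by norm_num)
  linarith

lemma two_thirds_mul_sqrt_lt : 2 / 3 * √(2 / 3) < (59 / 108 : ℝ) := by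
  have h : √(2 / 3) < (59 / 72 : ℝ) := (Real.sqrt_lt' (by norm_num)).2 (by norm_num)
  linarith

theorem integral_postedPayment_sum_le (t : ℝ) :
    ∫ v in unitSquare, postedPayment t (v.1 + v.2) ≤
      2 / 3 * √(2 / 3) := by
  rw [integral_postedPayment (by fun_prop)]
  rcases le_total t 0 with ht0 | ht0
  · exact (mul_nonpos_of_nonpos_of_nonneg ht0 measureReal_nonneg).trans (by positivity)
  rcases le_total t 1 with ht1 | ht1
  · rw [volume_real_unitSquare_sum_ge_of_le_one ht1, max_eq_right ht0]
    exact (by ring : t * (1 - t ^ 2 / 2) = t - t ^ 3 / 2).trans_le (sub_cube_div_two_le ht0)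
  · rw [volume_real_unitSquare_sum_ge_of_one_le ht1]
    refine le_trans ?_ half_le_two_thirds_mul_sqrt
    rcases le_total t 2 with ht2 | ht2
    · rw [max_eq_right (sub_nonneg.2 ht2)]
      nlinarith [sq_nonneg (t - 1)]
    · rw [max_eq_left (sub_nonpos.2 ht2)]
      norm_num

end BundlePrice

section Revenue

variable {M : Finset ((ℝ × ℝ) × ℝ)}

lemma util_le_sum_sub_price {v : ℝ × ℝ} (hv : 0 ≤ v) {it : (ℝ × ℝ) × ℝ}
    (hx : it.1 ≤ 1) : util v it ≤ v.1 + v.2 - it.2 := by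
  have h1 : v.1 * it.1.1 ≤ v.1 := mul_le_of_le_one_right hv.1 hx.1
  have h2 : v.2 * it.1.2 ≤ v.2 := mul_le_of_le_one_right hv.2 hx.2
  unfold util
  linarith

lemma util_of_diagonal {it : (ℝ × ℝ) × ℝ} (h : it.1.1 = it.1.2) (v : ℝ × ℝ) :
    util v it = (v.1 + v.2) * it.1.1 - it.2 := by
  rw [util, ← h, add_mul]

lemma rev_le_integral (hM : IsMenu M) {g : ℝ × ℝ → ℝ}
    (hg : IntegrableOn g unitSquare)
    (hprice : ∀ v, 0 ≤ v → ∀ it ∈ M, IsMaxOn (util v) M it → it.2 ≤ g v) :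
    rev M ≤ ∫ v in unitSquare, g v := by
  refine integral_mono_of_nonneg (.of_forall fun v => Real.sSup_nonneg ?_) hg ?_
  · rintro _ ⟨it, hit, rfl, -⟩
    exact (hM.2 it hit).2.2
  · filter_upwards [ae_restrict_mem measurableSet_Icc] with v hv
    obtain ⟨best, hbest, hopt⟩ := M.exists_max_image (util v) ⟨_, hM.1⟩
    refine csSup_le ⟨best.2, best, hbest, rfl, hopt⟩ ?_
    rintro _ ⟨it, hit, rfl, hit_opt⟩
    exact hprice v hv.1 it hit hit_opt

theorem rev_le_of_price_eq_zero_or_eq (hM : IsMenu M) {p : ℝ} (hp : 0 ≤ p)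
    (hprice : ∀ it ∈ M, it.2 = 0 ∨ it.2 = p) : rev M ≤ 2 / 3 * √(2 / 3) := by
  refine (rev_le_integral hM (integrable_postedPayment (by fun_prop) p) ?_).trans
    (integral_postedPayment_sum_le p)
  intro v hv it hit hopt
  rcases hprice it hit with h0 | rfl
  · exact h0.trans_le (postedPayment_nonneg hp _)
  · obtain ⟨hx1, hx2, -⟩ := hM.2 it hit
    have hzero : 0 ≤ util v it := by simpa [util] using hopt hM.1
    have hbundle := util_le_sum_sub_price hv (it := it) ⟨hx1.2, hx2.2⟩
    exact (postedPayment_of_le (by linarith)).ge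

theorem rev_le_of_diagonal (hM : IsMenu M) (hdiag : ∀ it ∈ M, it.1.1 = it.1.2) :
    rev M ≤ 2 / 3 * √(2 / 3) := by
  obtain ⟨L, hweight, hsum, hL⟩ := exists_mixedPayment_ge_price (N := (M : Set _))
    (x := fun it => it.1.1) (p := Prod.snd) M.finite_toSet hM.1 rfl rfl
    (fun it hit => (hM.2 it hit).1) (fun it hit => (hM.2 it hit).2.2)
  have hw : Measurable fun v : ℝ × ℝ => v.1 + v.2 := by fun_prop
  calc rev M ≤ ∫ v in unitSquare, mixedPayment L (v.1 + v.2) := by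
        refine rev_le_integral hM (integrable_mixedPayment hw L) fun v hv it hit hopt => ?_
        refine hL _ (add_nonneg hv.1 hv.2) it hit (isMaxOn_iff.2 fun k hk => ?_)
        rw [← util_of_diagonal (hdiag k hk), ← util_of_diagonal (hdiag it hit)]
        exact hopt hk
    _ ≤ (L.map Prod.fst).sum * (2 / 3 * √(2 / 3)) :=
        integral_mixedPayment_le hw integral_postedPayment_sum_le L hweight
    _ ≤ 2 / 3 * √(2 / 3) := mul_le_of_le_one_left (by positivity) hsum

lemma SymmetricMenu.diagonal_or_price_eq_zero_or_eq (hS : SymmetricMenu M)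
    (hzero : ((0, 0), 0) ∈ M) (hcard : M.card ≤ 3) :
    (∀ it ∈ M, it.1.1 = it.1.2) ∨ ∃ i ∈ M, ∀ it ∈ M, it.2 = 0 ∨ it.2 = i.2 := by
  refine or_iff_not_imp_left.2 fun hdiag => ?_
  push Not at hdiag
  obtain ⟨⟨⟨a, b⟩, p⟩, hi, hab⟩ := hdiag
  have hsub : {((0, 0), 0), ((a, b), p), ((b, a), p)} ⊆ M := by
    simp [Finset.insert_subset_iff, hzero, hi, hS _ hi]
  have hthree : ({((0, 0), 0), ((a, b), p), ((b, a), p)} : Finset ((ℝ × ℝ) × ℝ)).card = 3 := by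
    refine Finset.card_eq_three.2 ⟨_, _, _, ?_, ?_, ?_, rfl⟩ <;> grind
  obtain rfl := Finset.eq_of_subset_of_card_le hsub (hcard.trans hthree.ge)
  refine ⟨_, hi, fun it hit => ?_⟩
  simp only [Finset.mem_insert, Finset.mem_singleton] at hit
  rcases hit with rfl | rfl | rfl <;> simp

theorem SymmetricMenu.rev_le (hS : SymmetricMenu M) (hM : IsMenu M) (hcard : M.card ≤ 3) :
    rev M ≤ 2 / 3 * √(2 / 3) := by
  rcases hS.diagonal_or_price_eq_zero_or_eq hM.1 hcard with hdiag | ⟨i, hi, hprice⟩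
  · exact rev_le_of_diagonal hM hdiag
  · exact rev_le_of_price_eq_zero_or_eq hM (hM.2 i hi).2.2 hprice

end Revenue

/-- every symmetric menu on `[0,1]²` with at most 3 items has
revenue strictly less than `59/108`; hence any at-most-three-item menu
achieving revenue `59/108` (the optimum) must be asymmetric. -/
theorem symmetric_three_menu_revenue_lt :
    (∀ M : Finset ((ℝ × ℝ) × ℝ), IsMenu M → SymmetricMenu M → M.card ≤ 3 →
      rev M < 59 / 108) ∧
    (∀ M : Finset ((ℝ × ℝ) × ℝ), IsMenu M → M.card ≤ 3 →
      rev M = 59 / 108 → ¬ SymmetricMenu M) := by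
  have hlt (M : Finset ((ℝ × ℝ) × ℝ)) (hM : IsMenu M) (hS : SymmetricMenu M) (hcard : M.card ≤ 3) :
      rev M < 59 / 108 :=
    (hS.rev_le hM hcard).trans_lt two_thirds_mul_sqrt_lt
  exact ⟨hlt, fun M hM hcard hrev hS => (hlt M hM hS hcard).ne hrev⟩
end
end

section
/- For any menu M on [0,1]^2 with at most 3 items (including the zero item ((0,0),0)), there exists a menu M' with at most 3 items, containing the zero item and containing an item of the form ((1,1),p) for some p ≥ 0, whose revenue under the uniform distribution on [0,1]^2 is at least that of M. -/
open MeasureTheory Real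

noncomputable section

/-!
Let `p` be the highest price of the menu. Replace all items of price `p` by the full bundle at
price `p`. A buyer of nonnegative value likes the bundle at least as much as anything it replaced,
so whoever paid `p` still does; everyone else either keeps the same choice or switches to the
bundle and then pays the highest price. Hence the payment of every buyer weakly increases, whatever
the distribution of values.
-/

theorem util_le_util {v : ℝ × ℝ} {it it' : (ℝ × ℝ) × ℝ} (hv : 0 ≤ v)
    (halloc : it.1 ≤ it'.1) (hprice : it'.2 ≤ it.2) : util v it ≤ util v it' := by
  unfold util
  gcongr
  exacts [hv.1, halloc.1, hv.2, halloc.2]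

theorem measurable_util (it : (ℝ × ℝ) × ℝ) : Measurable fun v => util v it := by
  unfold util
  fun_prop

section BuyerPrice

variable {M M' : Finset ((ℝ × ℝ) × ℝ)} {v : ℝ × ℝ}

theorem finite_optimal_prices (M : Finset ((ℝ × ℝ) × ℝ)) (v : ℝ × ℝ) :
    {p : ℝ | ∃ it ∈ M, it.2 = p ∧ ∀ it' ∈ M, util v it' ≤ util v it}.Finite := by
  refine (M.finite_toSet.image Prod.snd).subset ?_
  rintro p ⟨it, hit, hp, -⟩
  exact ⟨it, hit, hp⟩

theorem exists_isMaxOn_price_eq_buyerPrice (hM : M.Nonempty) (v : ℝ × ℝ) :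
    ∃ it ∈ M, it.2 = buyerPrice M v ∧ IsMaxOn (util v) M it := by
  obtain ⟨it, hit, hmax⟩ := M.exists_max_image (util v) hM
  have hne : {p : ℝ | ∃ it ∈ M, it.2 = p ∧ ∀ it' ∈ M, util v it' ≤ util v it}.Nonempty :=
    ⟨it.2, it, hit, rfl, hmax⟩
  exact hne.csSup_mem (finite_optimal_prices M v)

theorem le_buyerPrice_of_isMaxOn {it : (ℝ × ℝ) × ℝ} (hit : it ∈ M)
    (hmax : IsMaxOn (util v) M it) : it.2 ≤ buyerPrice M v :=
  le_csSup (finite_optimal_prices M v).bddAbove ⟨it, hit, rfl, hmax⟩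

theorem le_buyerPrice_iff (hM : M.Nonempty) {c : ℝ} :
    c ≤ buyerPrice M v ↔ ∃ it ∈ M, c ≤ it.2 ∧ IsMaxOn (util v) M it := by
  constructor
  · intro hc
    obtain ⟨it, hit, hprice, hmax⟩ := exists_isMaxOn_price_eq_buyerPrice hM v
    exact ⟨it, hit, hprice ▸ hc, hmax⟩
  · rintro ⟨it, hit, hc, hmax⟩
    exact hc.trans (le_buyerPrice_of_isMaxOn hit hmax)

theorem measurableSet_isMaxOn_util (M : Finset ((ℝ × ℝ) × ℝ)) (it : (ℝ × ℝ) × ℝ) :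
    MeasurableSet {v | IsMaxOn (util v) M it} := by
  simp only [isMaxOn_iff, Set.ofPred_forall]
  exact M.measurableSet_biInter fun it' _ =>
    measurableSet_le (measurable_util it') (measurable_util it)

theorem measurable_buyerPrice (hM : M.Nonempty) : Measurable (buyerPrice M) := by
  refine measurable_of_Ici fun c => ?_
  have preimage_eq : buyerPrice M ⁻¹' Set.Ici c =
      ⋃ it ∈ M.filter (c ≤ ·.2), {v | IsMaxOn (util v) M it} := by
    ext v
    simp [le_buyerPrice_iff hM, and_assoc]
  rw [preimage_eq]
  exact Finset.measurableSet_biUnion _ fun it _ => measurableSet_isMaxOn_util M it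

theorem abs_buyerPrice_le_sum (hM : M.Nonempty) (v : ℝ × ℝ) :
    |buyerPrice M v| ≤ ∑ it ∈ M, |it.2| := by
  obtain ⟨it, hit, hprice, -⟩ := exists_isMaxOn_price_eq_buyerPrice hM v
  rw [← hprice]
  exact M.single_le_sum (f := fun it => |it.2|) (fun _ _ => abs_nonneg _) hit

theorem integrable_buyerPrice (hM : M.Nonempty) (μ : Measure (ℝ × ℝ)) [IsFiniteMeasure μ] :
    Integrable (buyerPrice M) μ :=
  .of_bound (measurable_buyerPrice hM).aestronglyMeasurable _
    (ae_of_all _ (abs_buyerPrice_le_sum hM))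

theorem rev_le_rev_of_buyerPrice_le (hM : M.Nonempty) (hM' : M'.Nonempty)
    (h : ∀ v ∈ Set.Icc (0 : ℝ × ℝ) 1, buyerPrice M v ≤ buyerPrice M' v) : rev M ≤ rev M' := by
  have : IsFiniteMeasure (volume.restrict (Set.Icc (0 : ℝ × ℝ) 1)) :=
    isFiniteMeasure_restrict.2 isCompact_Icc.measure_lt_top.ne
  exact setIntegral_mono_on (integrable_buyerPrice hM _) (integrable_buyerPrice hM' _)
    measurableSet_Icc h

theorem buyerPrice_le_buyerPrice_of_dominated (hM : M.Nonempty)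
    (hold : ∀ it ∈ M, ∃ it' ∈ M', util v it ≤ util v it' ∧ it.2 ≤ it'.2)
    (hnew : ∀ it' ∈ M', it' ∉ M → ∀ it ∈ M, it.2 ≤ it'.2) :
    buyerPrice M v ≤ buyerPrice M' v := by
  obtain ⟨it, hit, hprice, hmax⟩ := exists_isMaxOn_price_eq_buyerPrice hM v
  obtain ⟨it', hit', hutil, hle⟩ := hold it hit
  obtain ⟨best, hbest, hprice', hmax'⟩ := exists_isMaxOn_price_eq_buyerPrice ⟨it', hit'⟩ v
  rw [← hprice]
  by_cases hbestM : best ∈ M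
  · have hmax_it' : IsMaxOn (util v) M' it' := fun j hj =>
      (hmax' hj).trans ((hmax hbestM).trans hutil)
    exact hle.trans (le_buyerPrice_of_isMaxOn hit' hmax_it')
  · exact (hnew best hbest hbestM it hit).trans_eq hprice'

end BuyerPrice

/-- The menu item selling both goods together at price `p`. -/
def fullBundle (p : ℝ) : (ℝ × ℝ) × ℝ := ((1, 1), p)

/-- The menu obtained from `M` by offering the full bundle at price `p` in place of all items
priced `p` or more. The zero item is put back because it is among the replaced items when
`p = 0`. -/
def bundleAbove (M : Finset ((ℝ × ℝ) × ℝ)) (p : ℝ) : Finset ((ℝ × ℝ) × ℝ) :=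
  insert 0 (insert (fullBundle p) (M.filter (·.2 < p)))

section BundleAbove

variable {M : Finset ((ℝ × ℝ) × ℝ)} {p : ℝ}

theorem mem_bundleAbove {it : (ℝ × ℝ) × ℝ} :
    it ∈ bundleAbove M p ↔ it = 0 ∨ it = fullBundle p ∨ it ∈ M ∧ it.2 < p := by
  simp only [bundleAbove, Finset.mem_insert, Finset.mem_filter]

theorem fullBundle_mem_bundleAbove : fullBundle p ∈ bundleAbove M p :=
  mem_bundleAbove.2 (.inr (.inl rfl))

theorem isMenu_bundleAbove (hM : IsMenu M) (hp : 0 ≤ p) : IsMenu (bundleAbove M p) := by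
  refine ⟨mem_bundleAbove.2 (.inl rfl), fun it hit => ?_⟩
  rcases mem_bundleAbove.1 hit with rfl | rfl | ⟨hit, -⟩
  · exact hM.2 0 hM.1
  · simpa [fullBundle] using hp
  · exact hM.2 it hit

theorem card_bundleAbove_le (hM : IsMenu M) (hp : ∃ it ∈ M, it.2 = p) :
    (bundleAbove M p).card ≤ max M.card 2 := by
  obtain ⟨top, htop, rfl⟩ := hp
  rcases (hM.2 top htop).2.2.eq_or_lt with hzero | hpos
  · have filter_eq_empty : M.filter (·.2 < top.2) = ∅ :=
      Finset.filter_eq_empty_iff.2 fun it hit => (hzero ▸ (hM.2 it hit).2.2).not_gt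
    rw [bundleAbove, filter_eq_empty]
    exact le_max_of_le_right Finset.card_le_two
  · have zero_mem : (0 : (ℝ × ℝ) × ℝ) ∈ M.filter (·.2 < top.2) :=
      Finset.mem_filter.2 ⟨hM.1, hpos⟩
    have filter_ssubset : M.filter (·.2 < top.2) ⊂ M :=
      Finset.filter_ssubset.2 ⟨top, htop, lt_irrefl _⟩
    rw [bundleAbove, Finset.insert_eq_of_mem (Finset.mem_insert_of_mem zero_mem)]
    exact le_max_of_le_left <|
      (Finset.card_insert_le _ _).trans (Finset.card_lt_card filter_ssubset)

theorem buyerPrice_le_buyerPrice_bundleAbove (hM : IsMenu M) (hp : ∀ it ∈ M, it.2 ≤ p)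
    {v : ℝ × ℝ} (hv : 0 ≤ v) : buyerPrice M v ≤ buyerPrice (bundleAbove M p) v := by
  refine buyerPrice_le_buyerPrice_of_dominated ⟨_, hM.1⟩ (fun it hit => ?_) fun it' hit' hnot => ?_
  · rcases (hp it hit).lt_or_eq with hlt | rfl
    · exact ⟨it, mem_bundleAbove.2 (.inr (.inr ⟨hit, hlt⟩)), le_rfl, le_rfl⟩
    · have halloc : it.1 ≤ (1, 1) := ⟨(hM.2 it hit).1.2, (hM.2 it hit).2.1.2⟩
      exact ⟨fullBundle it.2, fullBundle_mem_bundleAbove, util_le_util hv halloc le_rfl, le_rfl⟩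
  · rcases mem_bundleAbove.1 hit' with rfl | rfl | ⟨hmem, -⟩
    · exact absurd hM.1 hnot
    · exact hp
    · exact absurd hmem hnot

end BundleAbove

theorem exists_bundling_three_menu_general (M : Finset ((ℝ × ℝ) × ℝ)) (hM : IsMenu M) :
    ∃ M' : Finset ((ℝ × ℝ) × ℝ), IsMenu M' ∧ M'.card ≤ max M.card 2 ∧
      (∃ p : ℝ, 0 ≤ p ∧ (((1 : ℝ), (1 : ℝ)), p) ∈ M') ∧
      ∀ v : ℝ × ℝ, 0 ≤ v → buyerPrice M v ≤ buyerPrice M' v := by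
  obtain ⟨top, htop, hmax⟩ := M.exists_max_image Prod.snd ⟨_, hM.1⟩
  have htop_nonneg : 0 ≤ top.2 := (hM.2 top htop).2.2
  exact ⟨bundleAbove M top.2, isMenu_bundleAbove hM htop_nonneg,
    card_bundleAbove_le hM ⟨top, htop, rfl⟩, ⟨top.2, htop_nonneg, fullBundle_mem_bundleAbove⟩,
    fun _ => buyerPrice_le_buyerPrice_bundleAbove hM hmax⟩

/-- for any menu with at most 3 items there is a menu with at most
3 items containing the full-bundle allocation `(1,1)` whose revenue is at least
as large. -/
theorem exists_bundling_three_menu (M : Finset ((ℝ × ℝ) × ℝ))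
    (hM : IsMenu M) (hcard : M.card ≤ 3) :
    ∃ M' : Finset ((ℝ × ℝ) × ℝ), IsMenu M' ∧ M'.card ≤ 3 ∧
      (∃ p : ℝ, 0 ≤ p ∧ (((1 : ℝ), (1 : ℝ)), p) ∈ M') ∧
      rev M ≤ rev M' := by
  obtain ⟨M', hM', hcard', hbundle, hle⟩ := exists_bundling_three_menu_general M hM
  exact ⟨M', hM', hcard'.trans (max_le hcard (by norm_num)), hbundle,
    rev_le_rev_of_buyerPrice_le ⟨_, hM.1⟩ ⟨_, hM'.1⟩ fun v hv => hle v hv.1⟩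
end
end

section
/- Let p ≥ 1 > q ≥ 0 with q < p and δ ∈ [0,1) satisfy (p − q)/(1 − δ) < 1 and (q − δ*p)/(1 − δ) < 1. Then the menu M = {((0,0),0), ((1,1),p), ((1,δ),q)} has revenue at most 14/27 under the uniform distribution on [0,1]^2. -/
open MeasureTheory Real

noncomputable section

/-!
All nonzero items contain good 1 for sure, so for a fixed value `y` of good 2 the buyer faces a
posted price for good 1: she buys iff `v₁ ≥ min (q - δ * y) (p - y)`, and then pays `q` or `p`
according to whether `y` lies below or above the indifference value `a = (p - q) / (1 - δ)`.
Integrating, with `e = p - q` and `t = p - 1`,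
`2 * Rev = 1 + a * e * (1 - a - e) + (3 * (a * e) - 1) * t - 2 * t ^ 2`.
By AM-GM this is at most `1 + r ^ 2 - 2 * r ^ 3 + (3 * r ^ 2 - 1) * t - 2 * t ^ 2` with
`r = √(a * e) ∈ [0, 1]`, whose maximum `28 / 27` over `t ≥ 0` is attained at `r = 1 / 3`, `t = 0`.
-/

theorem buyerPrice_eq_snd {M : Finset ((ℝ × ℝ) × ℝ)} {v : ℝ × ℝ} {it : (ℝ × ℝ) × ℝ} (hit : it ∈ M)
    (hmax : ∀ it' ∈ M, util v it' ≤ util v it)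
    (htie : ∀ it' ∈ M, util v it ≤ util v it' → it'.2 ≤ it.2) :
    buyerPrice M v = it.2 := by
  refine IsGreatest.csSup_eq ⟨⟨it, hit, rfl, hmax⟩, ?_⟩
  rintro _ ⟨it', hit', rfl, hmax'⟩
  exact htie it' hit' (hmax' it hit)

/-- The three-item menu `{((0,0),0), ((1,1),p), ((1,δ),q)}`: buy nothing, the full bundle
at price `p`, or good 1 with a fraction `δ` of good 2 at price `q`. -/
def threeMenu (p q δ : ℝ) : Finset ((ℝ × ℝ) × ℝ) :=
  {((0, 0), 0), ((1, 1), p), ((1, δ), q)}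

/-- The value of good 2 at which the buyer is indifferent between the items `((1,1),p)` and
`((1,δ),q)` of `threeMenu p q δ`; meaningful for `δ ≠ 1`. -/
def switchValue (p q δ : ℝ) : ℝ :=
  (p - q) / (1 - δ)

/-- The least value of good 1 at which a buyer who values good 2 at `y` buys a nonzero item of
`threeMenu p q δ`. -/
def reservationValue (p q δ y : ℝ) : ℝ :=
  min (q - δ * y) (p - y)

section ThreeMenu

variable {p q δ y : ℝ}

theorem lt_switchValue_iff (hδ1 : δ < 1) : y < switchValue p q δ ↔ q - δ * y < p - y := by
  rw [switchValue, lt_div_iff₀ (sub_pos.2 hδ1)]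
  constructor <;> intro h <;> linarith

theorem switchValue_le_iff (hδ1 : δ < 1) : switchValue p q δ ≤ y ↔ p - y ≤ q - δ * y := by
  simpa only [not_lt] using (lt_switchValue_iff hδ1).not

theorem reservationValue_of_lt_switchValue (hδ1 : δ < 1) (hy : y < switchValue p q δ) :
    reservationValue p q δ y = q - δ * y :=
  min_eq_left ((lt_switchValue_iff hδ1).1 hy).le

theorem reservationValue_of_switchValue_le (hδ1 : δ < 1) (hy : switchValue p q δ ≤ y) :
    reservationValue p q δ y = p - y :=
  min_eq_right ((switchValue_le_iff hδ1).1 hy)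

theorem reservationValue_mem_Icc (hp1 : 1 ≤ p) (hq1 : q ≤ 1) (hδ0 : 0 ≤ δ)
    (hpq : p - q ≤ 1 - δ) (hy : y ∈ Set.Icc (0 : ℝ) 1) :
    reservationValue p q δ y ∈ Set.Icc (0 : ℝ) 1 := by
  have hδy : δ * y ≤ δ := mul_le_of_le_one_right hδ0 hy.2
  have hδy0 : 0 ≤ δ * y := mul_nonneg hδ0 hy.1
  exact ⟨le_min (by linarith) (by linarith [hy.2]), min_le_of_left_le (by linarith)⟩

theorem forall_mem_threeMenu {P : (ℝ × ℝ) × ℝ → Prop} :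
    (∀ it ∈ threeMenu p q δ, P it) ↔ P ((0, 0), 0) ∧ P ((1, 1), p) ∧ P ((1, δ), q) := by
  simp only [threeMenu, Finset.mem_insert, Finset.mem_singleton, forall_eq_or_imp, forall_eq]

theorem buyerPrice_threeMenu (hq0 : 0 ≤ q) (hqp : q ≤ p) (hδ1 : δ < 1) (v : ℝ × ℝ) :
    buyerPrice (threeMenu p q δ) v =
      if reservationValue p q δ v.2 ≤ v.1 then
        (if v.2 < switchValue p q δ then q else p)
      else 0 := by
  rcases lt_or_ge v.2 (switchValue p q δ) with hv | hv
  · have hlt := (lt_switchValue_iff hδ1).1 hv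
    rw [reservationValue_of_lt_switchValue hδ1 hv, if_pos hv]
    split_ifs with hbuy
    · refine buyerPrice_eq_snd (it := ((1, δ), q)) (by simp [threeMenu]) ?_ ?_ <;>
        simp only [forall_mem_threeMenu, util] <;> grind
    · refine buyerPrice_eq_snd (it := ((0, 0), 0)) (by simp [threeMenu]) ?_ ?_ <;>
        simp only [forall_mem_threeMenu, util] <;> grind
  · have hle := (switchValue_le_iff hδ1).1 hv
    rw [reservationValue_of_switchValue_le hδ1 hv, if_neg hv.not_gt]
    split_ifs with hbuy
    · refine buyerPrice_eq_snd (it := ((1, 1), p)) (by simp [threeMenu]) ?_ ?_ <;>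
        simp only [forall_mem_threeMenu, util] <;> grind
    · refine buyerPrice_eq_snd (it := ((0, 0), 0)) (by simp [threeMenu]) ?_ ?_ <;>
        simp only [forall_mem_threeMenu, util] <;> grind

end ThreeMenu

section Integration

theorem setIntegral_Icc_ite_le {a b c : ℝ} (r : ℝ) (hc : c ∈ Set.Icc a b) :
    ∫ x in Set.Icc a b, (if c ≤ x then r else 0) = r * (b - c) := by
  have hinter : Set.Icc a b ∩ Set.Ici c = Set.Icc c b := by
    rw [← Set.Ici_inter_Iic, Set.inter_right_comm, Set.Ici_inter_Ici, max_eq_right hc.1,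
      Set.Ici_inter_Iic]
  calc
    ∫ x in Set.Icc a b, (if c ≤ x then r else 0)
      = ∫ x in Set.Icc a b, (Set.Ici c).indicator (fun _ ↦ r) x := rfl
    _ = r * (b - c) := by
      rw [setIntegral_indicator measurableSet_Ici, hinter, setIntegral_const,
        Real.volume_real_Icc_of_le hc.2, smul_eq_mul, mul_comm]

theorem setIntegral_rectangle_ite_le {c r : ℝ → ℝ} {a₁ b₁ a₂ b₂ : ℝ} (h₂ : a₂ ≤ b₂)
    (hc : Measurable c) (hc_mem : ∀ y ∈ Set.Icc a₂ b₂, c y ∈ Set.Icc a₁ b₁)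
    (hr : IntegrableOn r (Set.Icc a₂ b₂)) :
    ∫ v in Set.Icc (a₁, a₂) (b₁, b₂), (if c v.2 ≤ v.1 then r v.2 else 0) =
      ∫ y in a₂..b₂, r y * (b₁ - c y) := by
  have hmeas : MeasurableSet {v : ℝ × ℝ | c v.2 ≤ v.1} :=
    measurableSet_le (hc.comp measurable_snd) measurable_fst
  have hint : Integrable (fun v : ℝ × ℝ ↦ if c v.2 ≤ v.1 then r v.2 else 0)
      ((volume.restrict (Set.Icc a₁ b₁)).prod (volume.restrict (Set.Icc a₂ b₂))) :=
    (hr.integrable.comp_snd _).indicator hmeas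
  rw [← Set.Icc_prod_Icc, Measure.volume_eq_prod, ← Measure.prod_restrict,
    integral_prod_symm _ hint, intervalIntegral.integral_of_le h₂, ← integral_Icc_eq_integral_Ioc]
  exact setIntegral_congr_fun measurableSet_Icc
    fun y hy ↦ setIntegral_Icc_ite_le (r y) (hc_mem y hy)

theorem intervalIntegral_ite_lt {f g : ℝ → ℝ} {a b c : ℝ} (hab : a ≤ b) (hbc : b ≤ c)
    (hf : IntervalIntegrable f volume a b) (hg : IntervalIntegrable g volume b c) :
    ∫ y in a..c, (if y < b then f y else g y) = (∫ y in a..b, f y) + ∫ y in b..c, g y := by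
  have hleft : Set.EqOn f (fun y ↦ if y < b then f y else g y) (Set.uIoo a b) := fun y hy ↦ by
    rw [Set.uIoo_of_le hab] at hy
    exact (if_pos hy.2).symm
  have hright : Set.EqOn g (fun y ↦ if y < b then f y else g y) (Set.uIoo b c) := fun y hy ↦ by
    rw [Set.uIoo_of_le hbc] at hy
    exact (if_neg hy.1.not_gt).symm
  rw [intervalIntegral.integral_congr_uIoo hleft, intervalIntegral.integral_congr_uIoo hright,
    intervalIntegral.integral_add_adjacent_intervals (hf.congr_uIoo hleft) (hg.congr_uIoo hright)]

theorem intervalIntegral_affine (k m a b : ℝ) :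
    ∫ y in a..b, (k + m * y) = k * (b - a) + m * ((b ^ 2 - a ^ 2) / 2) := by
  rw [intervalIntegral.integral_add (by simp) (Continuous.intervalIntegrable (by fun_prop) _ _),
    intervalIntegral.integral_const_mul, integral_id, intervalIntegral.integral_const,
    smul_eq_mul, mul_comm k]

end Integration

section Revenue

variable {p q δ : ℝ}

theorem switchValue_mem_Icc (hqp : q ≤ p) (hδ1 : δ < 1) (hpq : p - q ≤ 1 - δ) :
    switchValue p q δ ∈ Set.Icc (0 : ℝ) 1 :=
  ⟨div_nonneg (sub_nonneg.2 hqp) (sub_pos.2 hδ1).le, (div_le_one (sub_pos.2 hδ1)).2 hpq⟩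

theorem rev_threeMenu_eq_integral (hp1 : 1 ≤ p) (hq0 : 0 ≤ q) (hq1 : q ≤ 1) (hδ0 : 0 ≤ δ)
    (hδ1 : δ < 1) (hpq : p - q ≤ 1 - δ) :
    rev (threeMenu p q δ) = ∫ y in (0 : ℝ)..1,
      (if y < switchValue p q δ then q else p) * (1 - reservationValue p q δ y) := by
  have hres : Measurable (reservationValue p q δ) := by unfold reservationValue; fun_prop
  have hprice : IntegrableOn (fun y ↦ if y < switchValue p q δ then q else p) (Set.Icc 0 1) :=
    Integrable.piecewise (s := Set.Iio (switchValue p q δ)) measurableSet_Iio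
      (integrable_const q).integrableOn (integrable_const p).integrableOn
  simp_rw [rev, buyerPrice_threeMenu hq0 (hq1.trans hp1) hδ1]
  exact setIntegral_rectangle_ite_le zero_le_one hres
    (fun y hy ↦ reservationValue_mem_Icc hp1 hq1 hδ0 hpq hy) hprice

theorem rev_threeMenu (hp1 : 1 ≤ p) (hq0 : 0 ≤ q) (hq1 : q ≤ 1) (hδ0 : 0 ≤ δ) (hδ1 : δ < 1)
    (hpq : p - q ≤ 1 - δ) {a : ℝ} (ha : a = switchValue p q δ) :
    rev (threeMenu p q δ) =
      (1 + a * (p - q) * (1 - (a + (p - q))) + (3 * (a * (p - q)) - 1) * (p - 1) -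
        2 * (p - 1) ^ 2) / 2 := by
  obtain ⟨ha0, ha1⟩ : a ∈ Set.Icc (0 : ℝ) 1 := ha ▸ switchValue_mem_Icc (hq1.trans hp1) hδ1 hpq
  have hδa : a * (1 - δ) = p - q := by
    rw [ha, switchValue, div_mul_cancel₀ _ (sub_pos.2 hδ1).ne']
  have hsplit (y : ℝ) : (if y < a then q else p) * (1 - reservationValue p q δ y) =
      if y < a then q * (1 - q) + q * δ * y else p * (1 - p) + p * y := by
    subst ha
    split_ifs with hy
    · rw [reservationValue_of_lt_switchValue hδ1 hy]; ring
    · rw [reservationValue_of_switchValue_le hδ1 (not_lt.1 hy)]; ring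
  rw [rev_threeMenu_eq_integral hp1 hq0 hq1 hδ0 hδ1 hpq, ← ha]
  simp_rw [hsplit]
  rw [intervalIntegral_ite_lt ha0 ha1 (Continuous.intervalIntegrable (by fun_prop) _ _)
    (Continuous.intervalIntegrable (by fun_prop) _ _), intervalIntegral_affine,
    intervalIntegral_affine]
  linear_combination (-q * a / 2) * hδa

end Revenue

section PolynomialBound

theorem mul_mul_one_sub_add_le {x y : ℝ} (hx : 0 ≤ x) (hy : 0 ≤ y) :
    x * y * (1 - (x + y)) ≤ √(x * y) ^ 2 - 2 * √(x * y) ^ 3 := by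
  have amgm : 2 * √(x * y) ≤ x + y := by
    simpa only [Real.sqrt_mul hx, Real.sq_sqrt hx, Real.sq_sqrt hy, mul_assoc] using
      two_mul_le_add_sq √x √y
  have hsq : √(x * y) ^ 2 = x * y := Real.sq_sqrt (mul_nonneg hx hy)
  calc
    x * y * (1 - (x + y)) ≤ x * y * (1 - 2 * √(x * y)) :=
      mul_le_mul_of_nonneg_left (by linarith) (mul_nonneg hx hy)
    _ = √(x * y) ^ 2 - 2 * √(x * y) ^ 3 := by linear_combination (2 * √(x * y) - 1) * hsq

theorem sq_sub_two_mul_cube_le {r : ℝ} (hr : 0 ≤ r) : r ^ 2 - 2 * r ^ 3 ≤ 1 / 27 := by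
  have hdouble_root : 0 ≤ (3 * r - 1) ^ 2 * (6 * r + 1) := by positivity
  linarith

theorem sq_sub_two_mul_cube_add_le {r t : ℝ} (hr0 : 0 ≤ r) (hr1 : r ≤ 1) (ht : 0 ≤ t) :
    r ^ 2 - 2 * r ^ 3 + (3 * r ^ 2 - 1) * t - 2 * t ^ 2 ≤ 1 / 27 := by
  rcases le_total (3 * r ^ 2) 1 with hr | hr
  · have hslope : (3 * r ^ 2 - 1) * t ≤ 0 := mul_nonpos_of_nonpos_of_nonneg (by linarith) ht
    linarith [sq_sub_two_mul_cube_le hr0, sq_nonneg t]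
  · have hvertex : (3 * r ^ 2 - 1) * t - 2 * t ^ 2 ≤ (3 * r ^ 2 - 1) ^ 2 / 8 := by
      linarith [sq_nonneg (4 * t - (3 * r ^ 2 - 1))]
    have hhalf : 1 / 2 ≤ r := by nlinarith
    have hquartic : r ^ 2 - 2 * r ^ 3 + (3 * r ^ 2 - 1) ^ 2 / 8 ≤ 1 / 27 := by
      nlinarith [mul_nonneg (sub_nonneg.2 hr1) (sub_nonneg.2 hhalf)]
    linarith

theorem one_add_mul_mul_one_sub_add_le {x y t : ℝ} (hx : 0 ≤ x) (hy : 0 ≤ y) (hxy : x * y ≤ 1)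
    (ht : 0 ≤ t) :
    1 + x * y * (1 - (x + y)) + (3 * (x * y) - 1) * t - 2 * t ^ 2 ≤ 28 / 27 := by
  have hbound := sq_sub_two_mul_cube_add_le (Real.sqrt_nonneg (x * y)) (Real.sqrt_le_one.2 hxy) ht
  have hsq : √(x * y) ^ 2 = x * y := Real.sq_sqrt (mul_nonneg hx hy)
  rw [hsq] at hbound
  linarith [hsq ▸ mul_mul_one_sub_add_le hx hy]

end PolynomialBound

/-- Case 2: for `p ≥ 1 > q ≥ 0` with `q < p` and `δ ∈ [0,1)` with
`(p-q)/(1-δ) < 1` and `(q-δp)/(1-δ) < 1`, the menu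
`{((0,0),0), ((1,1),p), ((1,δ),q)}` has revenue at most `14/27`. -/
theorem case2_three_menu (p q δ : ℝ)
    (hp1 : 1 ≤ p) (hq1 : q < 1) (hq0 : 0 ≤ q) (hqp : q < p)
    (hδ0 : 0 ≤ δ) (hδ1 : δ < 1)
    (hA : (p - q) / (1 - δ) < 1)
    (hB : (q - δ * p) / (1 - δ) < 1) :
    rev {(((0 : ℝ), (0 : ℝ)), (0 : ℝ)),
         (((1 : ℝ), (1 : ℝ)), p),
         (((1 : ℝ), δ), q)} ≤ 14 / 27 := by
  have hpq : p - q ≤ 1 - δ := ((div_lt_one (sub_pos.2 hδ1)).1 hA).le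
  obtain ⟨ha0, ha1⟩ := switchValue_mem_Icc hqp.le hδ1 hpq
  have hmul : switchValue p q δ * (p - q) ≤ 1 :=
    mul_le_one₀ ha1 (sub_nonneg.2 hqp.le) (by linarith)
  calc
    rev (threeMenu p q δ) = _ := rev_threeMenu hp1 hq0 hq1.le hδ0 hδ1 hpq rfl
    _ ≤ 28 / 27 / 2 := div_le_div_of_nonneg_right
      (one_add_mul_mul_one_sub_add_le ha0 (sub_nonneg.2 hqp.le) hmul (sub_nonneg.2 hp1)) two_pos.le
    _ = 14 / 27 := by norm_num
end
end
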